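/- Let p be a prime, A = (ℤ/pℤ)^r with r ≥ 3, and ℓ > 1 with gcd(ℓ, p) = 1. For any A-extension L/k, |Cl_{L/k}[ℓ]|^{(p^{r-1}-1)/(p-1)} = ∏_j |Cl_{M_j/k}[ℓ]|, where M_j ranges over all subfields of L with [M_j : k] = p². -/

import Mathlib

open NumberField

/-- The `ℓ`-torsion subgroup `G[ℓ] = {x : x^ℓ = 1}` of a commutative group. -/
def lTors (G : Type*) [CommGroup G] (ℓ : ℕ) : Subgroup G where
  carrier := {x | x ^ ℓ = 1}
  one_mem' := one_pow ℓ
  mul_mem' := by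
    intro a b ha hb
    simp only [Set.mem_setOf_eq] at *
    rw [mul_pow, ha, hb, mul_one]
  inv_mem' := by
    intro a ha
    simp only [Set.mem_setOf_eq] at *
    rw [inv_pow, ha, inv_one]

/-!
Let `D = Cl_{L/k}[ℓ]`. The elementary abelian `p`-group `G = Gal(L/k)` has no nontrivial invariants
on `D`, since on invariants the norm of `G`, which is trivial on `D`, is the `|G|`-th power, and
`ℓ` is prime to `p`. For `H` running over the subgroups of index `p`, each `g ≠ 1` lies in
`(p^{r-1} - 1) / (p - 1)` of them and `1` lies in `p^{r-1}` more, so the norms satisfy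
`∏ H, N_H = (·) ^ p^{r-1}`, which is bijective on `D`. If `x` is `M`-invariant and `M ≰ H`, then
`N_H x` is invariant under `H ⊔ M = G`, hence trivial. Consequently the norms give a bijection
`D^M ≃ ∏_{H ≥ M} D^H`. For `M = 1` this factors `|D|`, for `M` of index `p²` it factors `|D^M|`,
and each `H` contains `(p^{r-1} - 1) / (p - 1)` subgroups of index `p²`. Finally
`D^M ≃ Cl_{L^M/k}[ℓ]`, because extension and norm are inverse to each other up to `|M|`-th powers.
-/

theorem card_submodule_finrank_add_one_eq (F V : Type*) [Field F] [Finite F] [AddCommGroup V]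
    [Module F V] [FiniteDimensional F V] :
    Nat.card {W : Submodule F V // Module.finrank F W + 1 = Module.finrank F V} =
      (Nat.card V - 1) / (Nat.card F - 1) := by
  have annihilatorEquiv : {W : Submodule F V // Module.finrank F W + 1 = Module.finrank F V} ≃
      {H : Submodule F (Module.Dual F V) // Module.finrank F H = 1} :=
    (Subspace.orderIsoFiniteDimensional.toEquiv.trans OrderDual.ofDual).subtypeEquiv fun W ↦ by
      have := Subspace.finrank_add_finrank_dualAnnihilator_eq W
      change _ ↔ Module.finrank F W.dualAnnihilator = 1
      lia
  rw [Nat.card_congr annihilatorEquiv, ← Nat.card_congr (Projectivization.equivSubmodule F _),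
    Projectivization.card'', Module.natCard_eq_pow_finrank (K := F) (V := Module.Dual F V),
    Subspace.dual_finrank_eq, ← Module.natCard_eq_pow_finrank]

theorem card_addSubgroup_index_eq_prime (p : ℕ) [Fact p.Prime] (V : Type*) [AddCommGroup V]
    [Module (ZMod p) V] [Finite V] :
    Nat.card {H : AddSubgroup V // H.index = p} = (Nat.card V - 1) / (p - 1) := by
  have hp := Fact.out (p := p.Prime)
  have index_eq_iff (H : AddSubgroup V) : H.index = p ↔
      Module.finrank (ZMod p) (H.toZModSubmodule p) + 1 = Module.finrank (ZMod p) V := by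
    have hcard : Nat.card (H.toZModSubmodule p) * H.index = Nat.card V := H.card_mul_index
    rw [Module.natCard_eq_pow_finrank (K := ZMod p) (V := V),
      Module.natCard_eq_pow_finrank (K := ZMod p) (V := H.toZModSubmodule p),
      Nat.card_zmod] at hcard
    rw [← Nat.pow_right_inj hp.two_le (n := Module.finrank (ZMod p) V), ← hcard, pow_succ,
      Nat.mul_right_inj (pow_pos hp.pos _).ne', eq_comm]
  have card_hyperplanes := card_submodule_finrank_add_one_eq (ZMod p) V
  rw [Nat.card_zmod] at card_hyperplanes
  rw [← card_hyperplanes]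
  exact Nat.card_congr ((AddSubgroup.toZModSubmodule p).toEquiv.subtypeEquiv index_eq_iff)

theorem card_subgroup_index_eq_prime {G : Type*} [CommGroup G] [Finite G] {p : ℕ}
    (hp : p.Prime) (hG : ∀ g : G, g ^ p = 1) :
    Nat.card {H : Subgroup G // H.index = p} = (Nat.card G - 1) / (p - 1) := by
  have : Fact p.Prime := ⟨hp⟩
  let : Module (ZMod p) (Additive G) := AddCommGroup.zmodModule hG
  exact (Nat.card_congr (Subgroup.toAddSubgroup.toEquiv.subtypeEquiv fun _ ↦ Iff.rfl)).trans
    (card_addSubgroup_index_eq_prime p (Additive G))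

theorem card_subgroup_ge_index_eq_prime {G : Type*} [CommGroup G] [Finite G] {p : ℕ}
    (hp : p.Prime) (hG : ∀ g : G, g ^ p = 1) (K : Subgroup G) :
    Nat.card {H : Subgroup G // H.index = p ∧ K ≤ H} = (K.index - 1) / (p - 1) := by
  have hquot (g : G ⧸ K) : g ^ p = 1 := by
    obtain ⟨g, rfl⟩ := QuotientGroup.mk_surjective g
    rw [← QuotientGroup.mk_pow, hG, QuotientGroup.mk_one]
  rw [Subgroup.index, ← card_subgroup_index_eq_prime hp hquot]
  refine Nat.card_congr (.trans (.trans (Equiv.subtypeEquivRight fun _ ↦ and_comm)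
    (Equiv.subtypeSubtypeEquivSubtypeInter (K ≤ ·) (·.index = p)).symm)
    ((QuotientGroup.comapMk'OrderIso K).toEquiv.subtypeEquiv fun H ↦ ?_).symm)
  change H.index = p ↔ (H.comap (QuotientGroup.mk' K)).index = p
  rw [H.index_comap_of_surjective (QuotientGroup.mk'_surjective K)]

theorem card_subgroup_le_index_eq_prime_mul {G : Type*} [CommGroup G] [Finite G] {p : ℕ}
    (hp : p.Prime) (hG : ∀ g : G, g ^ p = 1) (H : Subgroup G) :
    Nat.card {M : Subgroup G // M.index = p * H.index ∧ M ≤ H} =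
      (Nat.card H - 1) / (p - 1) := by
  rw [← card_subgroup_index_eq_prime hp fun g : H ↦ Subtype.ext (hG g)]
  refine Nat.card_congr (.trans (.trans (Equiv.subtypeEquivRight fun _ ↦ and_comm)
    (Equiv.subtypeSubtypeEquivSubtypeInter (· ≤ H) (·.index = p * H.index)).symm)
    ((Subgroup.MapSubtype.orderIso H).toEquiv.subtypeEquiv fun M ↦ ?_).symm)
  change M.index = p ↔ (M.map H.subtype).index = p * H.index
  rw [Subgroup.index_map_subtype, Nat.mul_left_inj H.index_ne_zero_of_finite]

theorem sup_eq_top_of_prime_index {G : Type*} [Group G] {H K : Subgroup G}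
    (hH : H.index.Prime) (hK : ¬ K ≤ H) : H ⊔ K = ⊤ := by
  rw [← Subgroup.relIndex_mul_index (le_sup_left : H ≤ H ⊔ K), Nat.prime_mul_iff] at hH
  obtain ⟨-, hindex⟩ | ⟨-, hindex⟩ := hH
  · exact Subgroup.index_eq_one.mp hindex
  · exact absurd (le_sup_right.trans (Subgroup.relIndex_eq_one.mp hindex)) hK

/-- The norm `x ↦ ∏ g, g • x` of a finite group acting on a commutative group, written
multiplicatively; `Representation.norm` is its linear analogue. -/
noncomputable def actionNorm (G D : Type*) [Group G] [Finite G] [CommGroup D]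
    [MulDistribMulAction G D] : D →* D :=
  let := Fintype.ofFinite G
  ∏ g : G, MulDistribMulAction.toMonoidHom D g

section actionNorm

variable {G D : Type*} [CommGroup D]

theorem actionNorm_apply [Group G] [Fintype G] [MulDistribMulAction G D] (x : D) :
    actionNorm G D x = ∏ g : G, g • x := by
  simp only [actionNorm, MonoidHom.finsetProd_apply, MulDistribMulAction.toMonoidHom_apply]
  congr!

theorem actionNorm_mem_fixedPoints [Group G] [Finite G] [MulDistribMulAction G D] (x : D) :
    actionNorm G D x ∈ FixedPoints.subgroup G D := by
  have := Fintype.ofFinite G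
  intro h
  simp only [actionNorm_apply, Finset.smul_prod', smul_smul]
  exact Fintype.prod_equiv (Equiv.mulLeft h) _ _ fun _ ↦ rfl

theorem actionNorm_of_mem_fixedPoints [Group G] [Finite G] [MulDistribMulAction G D] {x : D}
    (hx : x ∈ FixedPoints.subgroup G D) : actionNorm G D x = x ^ Nat.card G := by
  have := Fintype.ofFinite G
  rw [actionNorm_apply, Finset.prod_congr rfl fun g _ ↦ hx g, Finset.prod_const, Finset.card_univ,
    Nat.card_eq_fintype_card]

theorem fixedPoints_sup_eq_inf [Group G] [MulDistribMulAction G D] (H K : Subgroup G) :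
    FixedPoints.subgroup (H ⊔ K : Subgroup G) D =
      FixedPoints.subgroup H D ⊓ FixedPoints.subgroup K D :=
  SetLike.coe_injective (fixedPoints_subgroup_sup G D)

theorem fixedPoints_top_eq [Group G] [MulDistribMulAction G D] :
    FixedPoints.subgroup (⊤ : Subgroup G) D = FixedPoints.subgroup G D :=
  le_antisymm (fun _ hx g ↦ hx ⟨g, trivial⟩) fun _ hx g ↦ hx g

theorem fixedPoints_bot_eq [Group G] [MulDistribMulAction G D] :
    FixedPoints.subgroup (⊥ : Subgroup G) D = ⊤ :=
  eq_top_iff.mpr fun x _ g ↦ by rw [Subsingleton.elim g 1, one_smul]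

variable [CommGroup G] [Finite G] [MulDistribMulAction G D]

theorem actionNorm_mem_fixedPoints_sup (H : Subgroup G) {K : Subgroup G} {x : D}
    (hx : x ∈ FixedPoints.subgroup K D) :
    actionNorm H D x ∈ FixedPoints.subgroup (H ⊔ K : Subgroup G) D := by
  have := Fintype.ofFinite H
  rw [fixedPoints_sup_eq_inf]
  refine ⟨actionNorm_mem_fixedPoints x, fun k ↦ ?_⟩
  rw [actionNorm_apply, Finset.smul_prod']
  exact Finset.prod_congr rfl fun h _ ↦ by rw [smul_comm, hx k]

theorem actionNorm_eq_one_of_not_le (hfix : FixedPoints.subgroup G D = ⊥) {H K : Subgroup G}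
    (hH : H.index.Prime) (hK : ¬ K ≤ H) {x : D} (hx : x ∈ FixedPoints.subgroup K D) :
    actionNorm H D x = 1 := by
  have := actionNorm_mem_fixedPoints_sup H hx
  rwa [sup_eq_top_of_prime_index hH hK, fixedPoints_top_eq, hfix] at this

end actionNorm

section Decomposition

theorem prod_actionNorm_eq_prod_smul_pow {G D : Type*} [Group G] [Fintype G] [CommGroup D]
    [MulDistribMulAction G D] (P : Subgroup G → Prop) [DecidablePred P] (x : D) :
    ∏ H : Subgroup G with P H, actionNorm H D x =
      ∏ g : G, (g • x) ^ Nat.card {H : Subgroup G // P H ∧ g ∈ H} := by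
  classical
  have norm_eq (H : Subgroup G) : actionNorm H D x = ∏ g : G with g ∈ H, g • x := by
    rw [actionNorm_apply]
    exact (Finset.prod_subtype _ (by simp) (· • x)).symm
  simp only [norm_eq]
  rw [Finset.prod_comm' (t' := Finset.univ) (s' := fun g ↦ {H | P H ∧ g ∈ H}) (by simp)]
  refine Finset.prod_congr rfl fun g _ ↦ ?_
  rw [Finset.prod_const, Nat.card_eq_fintype_card, Fintype.card_subtype]

variable {G D : Type*} [CommGroup G] [CommGroup D] [MulDistribMulAction G D] {p n : ℕ}

theorem card_subgroup_index_eq_prime_mem [Finite G] (hp : p.Prime) (hG : ∀ g : G, g ^ p = 1)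
    (hn : Nat.card G = p * n) (g : G) [Decidable (g = 1)] :
    Nat.card {H : Subgroup G // H.index = p ∧ g ∈ H} =
      (n - 1) / (p - 1) + if g = 1 then n else 0 := by
  have hcard : (Subgroup.zpowers g).index = if g = 1 then p * n else n := by
    have hmul := (Subgroup.zpowers g).card_mul_index
    rw [Nat.card_zpowers, hn] at hmul
    split_ifs with hg
    · rwa [hg, orderOf_one, one_mul, ← hg] at hmul
    · have : Fact p.Prime := ⟨hp⟩
      rw [orderOf_eq_prime (hG g) hg] at hmul
      exact Nat.eq_of_mul_eq_mul_left hp.pos hmul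
  simp only [← Subgroup.zpowers_le]
  rw [card_subgroup_ge_index_eq_prime hp hG, hcard]
  split_ifs
  · have hnpos : 0 < n := Nat.pos_of_mul_pos_left (hn ▸ Nat.card_pos)
    have hsplit : p * n - 1 = n - 1 + n * (p - 1) := by
      have := Nat.le_mul_of_pos_left n hp.pos
      rw [Nat.mul_sub_one, mul_comm n p]
      lia
    rw [hsplit, Nat.add_mul_div_right _ _ (Nat.sub_pos_of_lt hp.one_lt)]
  · rw [add_zero]

theorem prod_actionNorm_index_eq_prime [Fintype G] (hp : p.Prime) (hG : ∀ g : G, g ^ p = 1)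
    (hn : Nat.card G = p * n) (hfix : FixedPoints.subgroup G D = ⊥) (x : D) :
    ∏ H : Subgroup G with H.index = p, actionNorm H D x = x ^ n := by
  classical
  have norm_eq_one : ∏ g : G, g • x = 1 := by
    have := actionNorm_mem_fixedPoints (G := G) x
    rwa [hfix, Subgroup.mem_bot, actionNorm_apply] at this
  rw [prod_actionNorm_eq_prod_smul_pow]
  simp only [card_subgroup_index_eq_prime_mem hp hG hn, pow_add,
    Finset.prod_mul_distrib, Finset.prod_pow, norm_eq_one, one_pow, one_mul]
  simp [pow_ite]

theorem exists_mem_fixedPoints_pow_eq {G D : Type*} [Group G] [CommGroup D]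
    [MulDistribMulAction G D] {n : ℕ} (hpow : Function.Bijective fun x : D ↦ x ^ n) {x : D}
    (hx : x ∈ FixedPoints.subgroup G D) : ∃ y ∈ FixedPoints.subgroup G D, y ^ n = x := by
  obtain ⟨y, rfl⟩ := hpow.surjective x
  exact ⟨y, fun g ↦ hpow.injective ((smul_pow' g y n).symm.trans (hx g)), rfl⟩

theorem actionNorm_pi_injective [Finite G] (hp : p.Prime) (hG : ∀ g : G, g ^ p = 1)
    (hn : Nat.card G = p * n) (hfix : FixedPoints.subgroup G D = ⊥)
    (hpow : Function.Injective fun x : D ↦ x ^ n) {K : Subgroup G} {x y : D}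
    (hx : x ∈ FixedPoints.subgroup K D) (hy : y ∈ FixedPoints.subgroup K D)
    (hxy : ∀ H : Subgroup G, H.index = p → K ≤ H → actionNorm H D x = actionNorm H D y) :
    x = y := by
  have := Fintype.ofFinite G
  classical
  refine hpow ?_
  simp only [← prod_actionNorm_index_eq_prime hp hG hn hfix]
  refine Finset.prod_congr rfl fun H hH ↦ ?_
  obtain hindex : H.index = p := by simpa using hH
  by_cases hK : K ≤ H
  · exact hxy H hindex hK
  · rw [actionNorm_eq_one_of_not_le hfix (hindex ▸ hp) hK hx,
      actionNorm_eq_one_of_not_le hfix (hindex ▸ hp) hK hy]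

theorem card_eq_of_index_eq {G : Type*} [Group G] {p n : ℕ} (hp : 0 < p)
    (hn : Nat.card G = p * n) {H : Subgroup G} (hH : H.index = p) : Nat.card H = n := by
  have := H.card_mul_index
  rw [hn, hH, mul_comm] at this
  exact Nat.eq_of_mul_eq_mul_left hp this

theorem exists_actionNorm_eq [Finite G] (hp : p.Prime) (hn : Nat.card G = p * n)
    (hfix : FixedPoints.subgroup G D = ⊥) (hpow : Function.Bijective fun x : D ↦ x ^ n)
    {K : Subgroup G} (z : ∀ H : {H : Subgroup G // H.index = p ∧ K ≤ H},
      FixedPoints.subgroup (H : Subgroup G) D) :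
    ∃ x ∈ FixedPoints.subgroup K D, ∀ H, actionNorm H.1 D x = z H := by
  choose y hyfix hypow using fun H ↦ exists_mem_fixedPoints_pow_eq hpow (z H).2
  have := Fintype.ofFinite G
  classical
  refine ⟨∏ H, y H, Subgroup.prod_mem _ fun H _ ↦ fixedPoints_subgroup_antitone G D H.2.2 (hyfix H),
    fun H ↦ ?_⟩
  rw [map_prod, Finset.prod_eq_single_of_mem H (Finset.mem_univ H),
    actionNorm_of_mem_fixedPoints (hyfix H),
    card_eq_of_index_eq hp.pos hn H.2.1, hypow]
  intro H' _ hne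
  refine actionNorm_eq_one_of_not_le hfix (H.2.1.symm ▸ hp) (fun hle ↦ hne ?_)
    (hyfix H')
  exact Subtype.ext <| hle.eq_of_not_lt fun hlt ↦
    (Subgroup.index_strictAnti hlt).ne (H.2.1.trans H'.2.1.symm)

open scoped Classical in
theorem card_fixedPoints_eq_prod [Fintype G] (hp : p.Prime) (hG : ∀ g : G, g ^ p = 1)
    (hn : Nat.card G = p * n) (hfix : FixedPoints.subgroup G D = ⊥)
    (hpow : Function.Bijective fun x : D ↦ x ^ n) (K : Subgroup G) :
    Nat.card (FixedPoints.subgroup K D) =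
      ∏ H : Subgroup G with H.index = p ∧ K ≤ H, Nat.card (FixedPoints.subgroup H D) := by
  rw [Finset.prod_subtype (p := fun H ↦ H.index = p ∧ K ≤ H) _ (by simp), ← Nat.card_pi]
  refine Nat.card_congr (Equiv.ofBijective (fun x H ↦ ⟨actionNorm H.1 D x.1,
    actionNorm_mem_fixedPoints x.1⟩) ⟨fun x y hxy ↦ Subtype.ext ?_, fun z ↦ ?_⟩)
  · exact actionNorm_pi_injective hp hG hn hfix hpow.injective x.2 y.2 fun H hH hK ↦
      congrArg Subtype.val (congrFun hxy ⟨H, hH, hK⟩)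
  · obtain ⟨x, hx, hxz⟩ := exists_actionNorm_eq hp hn hfix hpow z
    exact ⟨⟨x, hx⟩, funext fun H ↦ Subtype.ext (hxz H)⟩

theorem card_pow_eq_prod_card_fixedPoints [Fintype G] (hp : p.Prime) (hG : ∀ g : G, g ^ p = 1)
    (hn : Nat.card G = p * n) (hfix : FixedPoints.subgroup G D = ⊥)
    (hpow : Function.Bijective fun x : D ↦ x ^ n) :
    Nat.card D ^ ((n - 1) / (p - 1)) =
      ∏ M : Subgroup G with M.index = p ^ 2, Nat.card (FixedPoints.subgroup M D) := by
  classical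
  have card_layer {H : Subgroup G} (hH : H.index = p) :
      Finset.card {M : Subgroup G | M.index = p ^ 2 ∧ M ≤ H} = (n - 1) / (p - 1) := by
    rw [← card_eq_of_index_eq hp.pos hn hH, ← card_subgroup_le_index_eq_prime_mul hp hG, hH, ← sq,
      Nat.card_eq_fintype_card, Fintype.card_subtype]
  have card_eq : Nat.card D =
      ∏ H : Subgroup G with H.index = p, Nat.card (FixedPoints.subgroup H D) := by
    have := card_fixedPoints_eq_prod hp hG hn hfix hpow ⊥
    simpa [fixedPoints_bot_eq] using this
  symm
  calc ∏ M : Subgroup G with M.index = p ^ 2, Nat.card (FixedPoints.subgroup M D)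
    _ = ∏ M : Subgroup G with M.index = p ^ 2, ∏ H : Subgroup G with H.index = p ∧ M ≤ H,
          Nat.card (FixedPoints.subgroup H D) :=
        Finset.prod_congr rfl fun M _ ↦ card_fixedPoints_eq_prod hp hG hn hfix hpow M
    _ = ∏ H : Subgroup G with H.index = p, ∏ M : Subgroup G with M.index = p ^ 2 ∧ M ≤ H,
          Nat.card (FixedPoints.subgroup H D) :=
        Finset.prod_comm' fun M H ↦ by simp only [Finset.mem_filter_univ]; tauto
    _ = ∏ H : Subgroup G with H.index = p,
          Nat.card (FixedPoints.subgroup H D) ^ ((n - 1) / (p - 1)) :=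
        Finset.prod_congr rfl fun H hH ↦ by
          rw [Finset.prod_const, card_layer (Finset.mem_filter_univ H |>.mp hH)]
    _ = Nat.card D ^ ((n - 1) / (p - 1)) := by rw [Finset.prod_pow, card_eq]

end Decomposition

section ClassGroup

open nonZeroDivisors Pointwise

section Map

variable {R S : Type*} [CommRing R] [CommRing S] [IsDedekindDomain R] [IsDedekindDomain S]

theorem idealMap_mem_nonZeroDivisors {φ : Ideal R →*₀ Ideal S} (hφ : ∀ I, φ I = ⊥ → I = ⊥)
    {I : Ideal R} (hI : I ∈ (Ideal R)⁰) : φ I ∈ (Ideal S)⁰ :=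
  mem_nonZeroDivisors_iff_ne_zero.mpr fun h ↦ nonZeroDivisors.ne_zero hI (hφ I h)

/-- The homomorphism of class groups induced by a multiplicative map of ideals that preserves
nonzero ideals and principal ideals. It serves both the ideal norm and the Galois action. -/
noncomputable def classGroupMap (φ : Ideal R →*₀ Ideal S) (hφ : ∀ I, φ I = ⊥ → I = ⊥)
    (hspan : ∀ x : R, ∃ y : S, φ (Ideal.span {x}) = Ideal.span {y}) :
    ClassGroup R →* ClassGroup S :=
  let φ₀ : (Ideal R)⁰ →* (Ideal S)⁰ :=
    ((φ : Ideal R →* Ideal S).comp (Ideal R)⁰.subtype).codRestrict (Ideal S)⁰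
      fun I ↦ idealMap_mem_nonZeroDivisors hφ I.2
  ((Con.ker ClassGroup.mk0).lift (ClassGroup.mk0.comp φ₀) fun I J hIJ ↦ by
    obtain ⟨x, y, hx, hy, hxy⟩ := ClassGroup.mk0_eq_mk0_iff.mp hIJ
    obtain ⟨x', hx'⟩ := hspan x
    obtain ⟨y', hy'⟩ := hspan y
    refine ClassGroup.mk0_eq_mk0_iff.mpr ⟨x', y', ?_, ?_, ?_⟩
    · rintro rfl
      exact hx (by simpa using hφ _ (hx'.trans (by simp)))
    · rintro rfl
      exact hy (by simpa using hφ _ (hy'.trans (by simp)))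
    · change _ * φ I = _ * φ J
      rw [← hx', ← hy', ← map_mul, ← map_mul, hxy]).comp
    (Con.quotientKerEquivOfSurjective _ ClassGroup.mk0_surjective).symm.toMonoidHom

theorem classGroupMap_mk0 (φ : Ideal R →*₀ Ideal S) (hφ : ∀ I, φ I = ⊥ → I = ⊥)
    (hspan : ∀ x : R, ∃ y : S, φ (Ideal.span {x}) = Ideal.span {y}) (I : (Ideal R)⁰) :
    classGroupMap φ hφ hspan (ClassGroup.mk0 I) =
      ClassGroup.mk0 ⟨φ I, idealMap_mem_nonZeroDivisors hφ I.2⟩ := by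
  have hsymm : (Con.quotientKerEquivOfSurjective (ClassGroup.mk0 (R := R))
      ClassGroup.mk0_surjective).symm (ClassGroup.mk0 I) = I :=
    (MulEquiv.symm_apply_eq _).mpr rfl
  simp only [classGroupMap, MonoidHom.comp_apply, MulEquiv.toMonoidHom_eq_coe, MonoidHom.coe_coe,
    hsymm]
  rfl

end Map

section Norm

variable (A B : Type*) [CommRing A] [CommRing B] [IsDedekindDomain A] [IsDedekindDomain B]
  [Algebra A B] [Module.Finite A B] [Module.IsTorsionFree A B]

/-- The norm `ClassGroup B →* ClassGroup A` induced by the relative ideal norm. -/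
noncomputable def classGroupNorm : ClassGroup B →* ClassGroup A :=
  classGroupMap (Ideal.relNorm A) (fun _ ↦ Ideal.relNorm_eq_bot_iff.mp)
    fun x ↦ ⟨Algebra.intNorm A B x, Ideal.relNorm_singleton A x⟩

variable {A B} in
theorem eq_one_of_relNorm_eq_one {J : Ideal B} (hJ : Ideal.relNorm A J = 1) : J = 1 := by
  have := Ideal.relNorm_le_comap A J
  rwa [hJ, Ideal.one_eq_top, top_le_iff, Ideal.comap_eq_top_iff, ← Ideal.one_eq_top] at this

variable {B} in
theorem relNorm_mem_nonZeroDivisors (I : (Ideal B)⁰) : Ideal.relNorm A I.1 ∈ (Ideal A)⁰ :=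
  idealMap_mem_nonZeroDivisors (fun _ ↦ Ideal.relNorm_eq_bot_iff.mp) I.2

theorem classGroupNorm_mk0 (I : (Ideal B)⁰) :
    classGroupNorm A B (ClassGroup.mk0 I) =
      ClassGroup.mk0 ⟨Ideal.relNorm A I.1, relNorm_mem_nonZeroDivisors A I⟩ :=
  classGroupMap_mk0 ..

variable {A B} in
theorem eq_classGroupNorm {f : ClassGroup B →* ClassGroup A}
    (hf : ∀ (I : Ideal B) (hI : I ∈ (Ideal B)⁰) (hJ : Ideal.spanNorm A I ∈ (Ideal A)⁰),
      f (ClassGroup.mk0 ⟨I, hI⟩) = ClassGroup.mk0 ⟨Ideal.spanNorm A I, hJ⟩) :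
    f = classGroupNorm A B := by
  ext x
  obtain ⟨I, rfl⟩ := ClassGroup.mk0_surjective x
  rw [classGroupNorm_mk0]
  exact hf I.1 I.2 (relNorm_mem_nonZeroDivisors A I)

variable {A} in
theorem classGroupNorm_extendedHom (x : ClassGroup A) :
    classGroupNorm A B (ClassGroup.extendedHom A B x) = x ^ Module.finrank A B := by
  obtain ⟨I, rfl⟩ := ClassGroup.mk0_surjective x
  rw [ClassGroup.extendedHom_mk0, classGroupNorm_mk0, ← map_pow]
  exact congrArg ClassGroup.mk0 (Subtype.ext (Ideal.relNorm_algebraMap B I.1))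

variable {B} in
theorem classGroupNorm_classGroupNorm (T : Type*) [CommRing T] [IsDedekindDomain T] [Algebra A T]
    [Algebra T B] [IsScalarTower A T B] [Module.Finite A T] [Module.Finite T B]
    [Module.IsTorsionFree A T] [Module.IsTorsionFree T B] (x : ClassGroup B) :
    classGroupNorm A T (classGroupNorm T B x) = classGroupNorm A B x := by
  obtain ⟨I, rfl⟩ := ClassGroup.mk0_surjective x
  simp only [classGroupNorm_mk0, Ideal.relNorm_relNorm]

end Norm

section Action

variable {G B : Type*} [Group G] [CommRing B] [IsDedekindDomain B] [MulSemiringAction G B]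

theorem smul_ideal_mem_nonZeroDivisors (g : G) (I : (Ideal B)⁰) : g • I.1 ∈ (Ideal B)⁰ :=
  mem_nonZeroDivisors_iff_ne_zero.mpr <|
    (smul_eq_zero_iff_eq g).not.mpr (nonZeroDivisors.ne_zero I.2)

/-- The action on ideal classes induced by the action on ideals. -/
noncomputable instance : SMul G (ClassGroup B) where
  smul g := classGroupMap (MulSemiringAction.toRingHom G (Ideal B) g).toMonoidWithZeroHom
    (fun _ h ↦ (smul_eq_zero_iff_eq g).mp h) fun x ↦ ⟨g • x, by
      change g • Ideal.span {x} = Ideal.span {g • x}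
      rw [Ideal.smul_closure, Set.smul_set_singleton]⟩

theorem smul_classGroup_mk0 (g : G) (I : (Ideal B)⁰) :
    g • ClassGroup.mk0 I = ClassGroup.mk0 ⟨g • I.1, smul_ideal_mem_nonZeroDivisors g I⟩ :=
  classGroupMap_mk0 ..

noncomputable instance : MulDistribMulAction G (ClassGroup B) where
  one_smul x := by
    obtain ⟨I, rfl⟩ := ClassGroup.mk0_surjective x
    simp only [smul_classGroup_mk0, one_smul]
  mul_smul g h x := by
    obtain ⟨I, rfl⟩ := ClassGroup.mk0_surjective x
    simp only [smul_classGroup_mk0, mul_smul]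
  smul_mul g := map_mul (classGroupMap _ _ _)
  smul_one g := map_one (classGroupMap _ _ _)

variable {A : Type*} [CommRing A] [IsDedekindDomain A] [Algebra A B] [Module.IsTorsionFree A B]

theorem smul_extendedHom [SMulCommClass G A B] (g : G) (x : ClassGroup A) :
    g • ClassGroup.extendedHom A B x = ClassGroup.extendedHom A B x := by
  obtain ⟨I, rfl⟩ := ClassGroup.mk0_surjective x
  rw [ClassGroup.extendedHom_mk0, smul_classGroup_mk0]
  refine congrArg ClassGroup.mk0 (Subtype.ext ?_)
  change g • I.1.map (algebraMap A B) = I.1.map (algebraMap A B)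
  rw [Ideal.pointwise_smul_def, Ideal.map_map]
  congr 1
  ext a
  exact smul_algebraMap g a

variable [Module.Finite A B]

theorem classGroupNorm_smul [SMulCommClass G A B] (g : G) (x : ClassGroup B) :
    classGroupNorm A B (g • x) = classGroupNorm A B x := by
  obtain ⟨I, rfl⟩ := ClassGroup.mk0_surjective x
  simp only [smul_classGroup_mk0, classGroupNorm_mk0, Ideal.relNorm_smul]

variable [IsGaloisGroup G A B]

theorem algebraMap_intNorm_eq_prod_smul [Fintype G] (x : B) :
    algebraMap A B (Algebra.intNorm A B x) = ∏ g : G, g • x := by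
  let : Algebra (FractionRing A) (FractionRing B) := FractionRing.liftAlgebra A (FractionRing B)
  let : MulSemiringAction G (FractionRing B) :=
    IsFractionRing.mulSemiringAction G B (FractionRing B)
  have : IsGaloisGroup G (FractionRing A) (FractionRing B) := .toFractionRing G A B
  have : IsGalois (FractionRing A) (FractionRing B) := IsGaloisGroup.isGalois G _ _
  rw [Algebra.algebraMap_intNorm_of_isGalois]
  exact (Fintype.prod_equiv (IsGaloisGroup.mulEquivAlgEquiv G A B).toEquiv _ _ fun _ ↦ rfl).symm

variable (A) in
theorem map_relNorm_le_prod_smul [Fintype G] (I : Ideal B) :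
    (Ideal.relNorm A I).map (algebraMap A B) ≤ ∏ g : G, g • I := by
  rw [Ideal.map_relNorm, Ideal.span_le]
  rintro _ ⟨x, hx, rfl⟩
  rw [Function.comp_apply, algebraMap_intNorm_eq_prod_smul (G := G)]
  exact Ideal.prod_mem_prod fun g _ ↦ Ideal.smul_mem_pointwise_smul g x I hx

/- The quotient ideal of the two sides has norm `1`, as both sides have norm
`relNorm A I ^ Nat.card G`. -/
variable (A) in
theorem map_relNorm_eq_prod_smul [Fintype G] (I : Ideal B) (hI : I ≠ ⊥) :
    (Ideal.relNorm A I).map (algebraMap A B) = ∏ g : G, g • I := by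
  obtain ⟨J, hJ⟩ := Ideal.dvd_iff_le.mpr (map_relNorm_le_prod_smul A (G := G) I)
  have hnorm : Ideal.relNorm A I ^ Nat.card G * Ideal.relNorm A J =
      Ideal.relNorm A I ^ Nat.card G * 1 := by
    have := congrArg (Ideal.relNorm A) hJ
    rw [map_mul, map_prod, Ideal.relNorm_algebraMap, ← IsGaloisGroup.card_eq_finrank' G] at this
    simp only [Ideal.relNorm_smul, Finset.prod_const, Finset.card_univ,
      ← Nat.card_eq_fintype_card] at this
    rw [← this, mul_one]
  have hI' : Ideal.relNorm A I ^ Nat.card G ≠ 0 :=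
    pow_ne_zero _ (Ideal.relNorm_eq_bot_iff.not.mpr hI)
  rw [hJ, eq_one_of_relNorm_eq_one (mul_left_cancel₀ hI' hnorm), mul_one]

variable (G A) in
theorem extendedHom_classGroupNorm [Finite G] (x : ClassGroup B) :
    ClassGroup.extendedHom A B (classGroupNorm A B x) = actionNorm G (ClassGroup B) x := by
  have := Fintype.ofFinite G
  obtain ⟨I, rfl⟩ := ClassGroup.mk0_surjective x
  simp only [classGroupNorm_mk0, ClassGroup.extendedHom_mk0, actionNorm_apply, smul_classGroup_mk0]
  refine Eq.trans (congrArg ClassGroup.mk0 (Subtype.ext ?_)) (map_prod ClassGroup.mk0 _ _)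
  rw [Submonoid.coe_finsetProd]
  exact map_relNorm_eq_prod_smul A I.1 (nonZeroDivisors.ne_zero I.2)

end Action
end ClassGroup

theorem bijective_pow_of_coprime {D : Type*} [CommGroup D] {ℓ n : ℕ} (hD : ∀ x : D, x ^ ℓ = 1)
    (h : n.Coprime ℓ) : Function.Bijective fun x : D ↦ x ^ n := by
  constructor
  · refine (injective_iff_map_eq_one (powMonoidHom n : D →* D)).mpr fun x hx ↦ ?_
    simpa only [h.gcd_eq_one, pow_one] using pow_gcd_eq_one.mpr ⟨hx, hD x⟩
  · intro x
    obtain ⟨m, hm⟩ :=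
      exists_pow_eq_self_of_coprime (h.coprime_dvd_right (orderOf_dvd_of_pow_eq_one (hD x)))
    exact ⟨x ^ m, (pow_right_comm x m n).trans hm⟩

section RelativeClassGroup

variable {A B : Type*} [CommRing A] [CommRing B] [IsDedekindDomain A] [IsDedekindDomain B]
  [Algebra A B] [Module.Finite A B] [Module.IsTorsionFree A B] {ℓ : ℕ}

variable (A B ℓ) in
/-- The `ℓ`-torsion of the relative class group of `B` over `A`, the kernel of the norm
`ClassGroup B →* ClassGroup A`. -/
noncomputable def relClassGroupTors : Subgroup (ClassGroup B) :=
  (classGroupNorm A B).ker ⊓ lTors (ClassGroup B) ℓ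

theorem mem_relClassGroupTors {x : ClassGroup B} :
    x ∈ relClassGroupTors A B ℓ ↔ classGroupNorm A B x = 1 ∧ x ^ ℓ = 1 :=
  Iff.rfl

theorem pow_eq_one_of_relClassGroupTors (x : relClassGroupTors A B ℓ) : x ^ ℓ = 1 :=
  Subtype.ext x.2.2

variable {G : Type*} [Group G] [MulSemiringAction G B]

noncomputable instance [SMulCommClass G A B] :
    MulDistribMulAction G (relClassGroupTors A B ℓ) where
  smul g x := ⟨g • x.1, mem_relClassGroupTors.mpr
    ⟨(classGroupNorm_smul g x.1).trans x.2.1, by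
      rw [← smul_pow', (mem_relClassGroupTors.mp x.2).2, smul_one]⟩⟩
  one_smul x := Subtype.ext (one_smul G x.1)
  mul_smul g h x := Subtype.ext (mul_smul g h x.1)
  smul_mul g x y := Subtype.ext (smul_mul' g x.1 y.1)
  smul_one g := Subtype.ext (smul_one g)

theorem mem_fixedPoints_relClassGroupTors [SMulCommClass G A B] {x : relClassGroupTors A B ℓ} :
    x ∈ FixedPoints.subgroup G (relClassGroupTors A B ℓ) ↔
      (x : ClassGroup B) ∈ FixedPoints.subgroup G (ClassGroup B) :=
  forall_congr' fun _ ↦ Subtype.ext_iff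

theorem fixedPoints_relClassGroupTors_eq_bot [Finite G] [IsGaloisGroup G A B]
    (hG : (Nat.card G).Coprime ℓ) : FixedPoints.subgroup G (relClassGroupTors A B ℓ) = ⊥ := by
  refine (Subgroup.eq_bot_iff_forall _).mpr fun x hx ↦ ?_
  refine (bijective_pow_of_coprime pow_eq_one_of_relClassGroupTors hG).1 (Subtype.ext ?_)
  calc (x : ClassGroup B) ^ Nat.card G
      = actionNorm G (ClassGroup B) x :=
        (actionNorm_of_mem_fixedPoints (mem_fixedPoints_relClassGroupTors.mp hx)).symm
    _ = ClassGroup.extendedHom A B (classGroupNorm A B x) :=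
        (extendedHom_classGroupNorm G A x.1).symm
    _ = 1 := by rw [(mem_relClassGroupTors.mp x.2).1, map_one]
    _ = ((1 : relClassGroupTors A B ℓ) : ClassGroup B) ^ Nat.card G := (one_pow _).symm

theorem card_relClassGroupTors_eq_card_fixedPoints [SMulCommClass G A B] [Finite G] (T : Type*)
    [CommRing T] [IsDedekindDomain T] [Algebra A T] [Algebra T B] [IsScalarTower A T B]
    [Module.Finite A T] [Module.Finite T B] [Module.IsTorsionFree A T] [Module.IsTorsionFree T B]
    [IsGaloisGroup G T B] (hG : (Nat.card G).Coprime ℓ) :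
    Nat.card (relClassGroupTors A T ℓ) =
      Nat.card (FixedPoints.subgroup G (relClassGroupTors A B ℓ)) := by
  have norm_ext (y : ClassGroup T) :
      classGroupNorm T B (ClassGroup.extendedHom T B y) = y ^ Nat.card G := by
    rw [classGroupNorm_extendedHom, IsGaloisGroup.card_eq_finrank' G T B]
  have ext_mem (y : relClassGroupTors A T ℓ) :
      ClassGroup.extendedHom T B y ∈ relClassGroupTors A B ℓ := by
    obtain ⟨hy, hyℓ⟩ := mem_relClassGroupTors.mp y.2
    refine mem_relClassGroupTors.mpr ⟨?_, by rw [← map_pow, hyℓ, map_one]⟩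
    rw [← classGroupNorm_classGroupNorm A T, norm_ext, map_pow, hy, one_pow]
  refine Nat.card_congr (Equiv.ofBijective (fun y ↦ ⟨⟨_, ext_mem y⟩,
    mem_fixedPoints_relClassGroupTors.mpr fun g ↦ smul_extendedHom g _⟩) ⟨fun y y' h ↦ ?_, ?_⟩)
  · refine (bijective_pow_of_coprime pow_eq_one_of_relClassGroupTors hG).1 (Subtype.ext ?_)
    have := congrArg (fun x ↦ classGroupNorm T B x.1.1) h
    exact (norm_ext _).symm.trans (this.trans (norm_ext _))
  · rintro ⟨x, hx⟩
    obtain ⟨z, hz, rfl⟩ := exists_mem_fixedPoints_pow_eq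
      (bijective_pow_of_coprime pow_eq_one_of_relClassGroupTors hG) hx
    obtain ⟨hz1, hzℓ⟩ := mem_relClassGroupTors.mp z.2
    refine ⟨⟨classGroupNorm T B z, mem_relClassGroupTors.mpr
      ⟨by rw [classGroupNorm_classGroupNorm, hz1], by rw [← map_pow, hzℓ, map_one]⟩⟩, ?_⟩
    refine Subtype.ext (Subtype.ext ?_)
    change ClassGroup.extendedHom T B (classGroupNorm T B z) = (z : ClassGroup B) ^ Nat.card G
    rw [extendedHom_classGroupNorm G T, actionNorm_of_mem_fixedPoints
      (mem_fixedPoints_relClassGroupTors.mp hz)]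

end RelativeClassGroup

theorem relative_class_group_second_layer_decomposition_general {p n ℓ : ℕ} (hp : p.Prime)
    (hcop : ℓ.Coprime p) {A B G : Type*} [CommRing A] [IsDedekindDomain A] [CommRing B]
    [IsDedekindDomain B] [Algebra A B] [Module.Finite A B] [Module.IsTorsionFree A B]
    [CommGroup G] [Finite G] [MulSemiringAction G B] [IsGaloisGroup G A B]
    (hG : ∀ g : G, g ^ p = 1) (hn : Nat.card G = p * n)
    (T : Subgroup G → Type*) [∀ H, CommRing (T H)] [∀ H, IsDedekindDomain (T H)]
    [∀ H, Algebra A (T H)] [∀ H, Algebra (T H) B] [∀ H, IsScalarTower A (T H) B]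
    [∀ H, Module.Finite A (T H)] [∀ H, Module.Finite (T H) B]
    [∀ H, Module.IsTorsionFree A (T H)] [∀ H, Module.IsTorsionFree (T H) B]
    [∀ H : Subgroup G, IsGaloisGroup H (T H) B] :
    Nat.card (relClassGroupTors A B ℓ) ^ ((n - 1) / (p - 1)) =
      ∏ᶠ (H : Subgroup G) (_ : H.index = p ^ 2), Nat.card (relClassGroupTors A (T H) ℓ) := by
  classical
  have := Fintype.ofFinite G
  have := Fact.mk hp
  obtain ⟨m, hm⟩ : ∃ m, Nat.card G = p ^ m :=
    IsPGroup.iff_card.mp fun g ↦ ⟨1, by rw [pow_one, hG]⟩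
  have coprime_of_dvd {d : ℕ} (hd : d ∣ Nat.card G) : d.Coprime ℓ :=
    (hcop.pow_right m).symm.coprime_dvd_left (hm ▸ hd)
  have hpow : Function.Bijective fun x : relClassGroupTors A B ℓ ↦ x ^ n :=
    bijective_pow_of_coprime pow_eq_one_of_relClassGroupTors
      (coprime_of_dvd (hn ▸ dvd_mul_left n p))
  rw [card_pow_eq_prod_card_fixedPoints hp hG hn
    (fixedPoints_relClassGroupTors_eq_bot (coprime_of_dvd dvd_rfl)) hpow,
    finprod_cond_eq_prod_of_cond_iff _ fun _ ↦ (Finset.mem_filter_univ _).symm]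
  exact Finset.prod_congr rfl fun H _ ↦ (card_relClassGroupTors_eq_card_fixedPoints (T H)
    (coprime_of_dvd H.card_subgroup_dvd_card)).symm

theorem finprod_intermediateField_finrank_eq {k L M : Type*} [Field k] [Field L] [Algebra k L]
    [FiniteDimensional k L] [IsGalois k L] [CommMonoid M] (f : IntermediateField k L → M) (n : ℕ) :
    ∏ᶠ (K : IntermediateField k L) (_ : Module.finrank k K = n), f K =
      ∏ᶠ (H : Subgroup Gal(L/k)) (_ : H.index = n), f (IntermediateField.fixedField H) :=
  finprod_eq_of_bijective _ IsGalois.intermediateFieldEquivSubgroup.bijective fun K ↦ by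
    change _ = ∏ᶠ _ : K.fixingSubgroup.index = n, f (IntermediateField.fixedField K.fixingSubgroup)
    rw [IsGalois.fixedField_fixingSubgroup, K.finrank_eq_fixingSubgroup_index]

/-- For `A = (ℤ/pℤ)^r` (`r ≥ 3`), `ℓ > 1` coprime to `p`, and an
`A`-extension `L/k` of number fields, the `ℓ`-torsion of the relative class
group (the kernel of the ideal-norm map `Nm` on class groups) satisfies
`|Cl_{L/k}[ℓ]|^{(p^{r-1}-1)/(p-1)} = Π_j |Cl_{M_j/k}[ℓ]|`, the product over all
subfields `M_j` of `L` with `[M_j : k] = p²`. -/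
theorem relative_class_group_second_layer_decomposition (p r ℓ : ℕ) (hp : p.Prime)
    (hr : 3 ≤ r) (hℓ : 1 < ℓ) (hcop : ℓ.Coprime p)
    (k L : Type) [Field k] [Field L] [NumberField k] [NumberField L]
    [Algebra k L] [IsGalois k L]
    (e : (L ≃ₐ[k] L) ≃* Multiplicative (Fin r → ZMod p))
    (NmL : ClassGroup (𝓞 L) →* ClassGroup (𝓞 k))
    (hNmL : ∀ (I : Ideal (𝓞 L)) (hI : I ∈ nonZeroDivisors (Ideal (𝓞 L)))
      (hJ : Ideal.spanNorm (𝓞 k) I ∈ nonZeroDivisors (Ideal (𝓞 k))),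
      NmL (ClassGroup.mk0 ⟨I, hI⟩) = ClassGroup.mk0 ⟨Ideal.spanNorm (𝓞 k) I, hJ⟩)
    (Nm : ∀ K : IntermediateField k L, ClassGroup (𝓞 K) →* ClassGroup (𝓞 k))
    (hNm : ∀ (K : IntermediateField k L) (I : Ideal (𝓞 K))
      (hI : I ∈ nonZeroDivisors (Ideal (𝓞 K)))
      (hJ : Ideal.spanNorm (𝓞 k) I ∈ nonZeroDivisors (Ideal (𝓞 k))),
      Nm K (ClassGroup.mk0 ⟨I, hI⟩) =
        ClassGroup.mk0 ⟨Ideal.spanNorm (𝓞 k) I, hJ⟩) :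
    Nat.card ↥(NmL.ker ⊓ lTors (ClassGroup (𝓞 L)) ℓ) ^ ((p ^ (r - 1) - 1) / (p - 1)) =
      ∏ᶠ (K : IntermediateField k L) (_ : Module.finrank k K = p ^ 2),
        Nat.card ↥((Nm K).ker ⊓ lTors (ClassGroup (𝓞 K)) ℓ) := by
  obtain rfl := eq_classGroupNorm hNmL
  obtain rfl : Nm = fun K : IntermediateField k L ↦ classGroupNorm (𝓞 k) (𝓞 K) :=
    funext fun K ↦ eq_classGroupNorm (hNm K)
  let : CommGroup Gal(L/k) :=
    { mul_comm := fun g h ↦ e.injective (by rw [map_mul, map_mul, mul_comm]) }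
  have hG (g : Gal(L/k)) : g ^ p = 1 := e.injective <| by
    rw [map_pow, map_one]
    exact Multiplicative.toAdd.injective (ZModModule.char_nsmul_eq_zero p (e g).toAdd)
  have hcard : Nat.card Gal(L/k) = p * p ^ (r - 1) := by
    rw [Nat.card_congr e.toEquiv, mul_pow_sub_one (by lia)]
    exact (Nat.card_fun).trans (by rw [Nat.card_zmod, Nat.card_fin])
  rw [finprod_intermediateField_finrank_eq]
  have (H : Subgroup Gal(L/k)) : IsGaloisGroup H (𝓞 (IntermediateField.fixedField H)) (𝓞 L) :=
    have : IsGaloisGroup H (IntermediateField.fixedField H) L := .subgroup Gal(L/k) k L H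
    IsGaloisGroup.of_isFractionRing H _ _ (IntermediateField.fixedField H) L
  exact relative_class_group_second_layer_decomposition_general hp hcop hG hcard
    fun H ↦ 𝓞 (IntermediateField.fixedField H)
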